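/- arXiv:0808.0338 — 6 statements merged into one kernel-verified Lean document; each statement's English description precedes it below -/
import Mathlib

section
/- Let U ⊆ ℝ² be an open neighbourhood of the origin and let σ : ℝ² → ℂ be smooth on U (ContDiffOn ℝ ⊤ σ U) satisfying x·∂σ/∂x(x,y) − y·∂σ/∂y(x,y) = −i·x·y·σ(x,y) for all (x,y) ∈ U. Then σ vanishes to infinite order at the origin: for every n ∈ ℕ, the n-th iterated Fréchet derivative of σ at (0,0) is zero (equivalently, ∂^{j+k}σ/∂x^j∂y^k(0,0) = 0 for all j,k). -/
/-!
Write `σ_{jk} = ∂ₓʲ ∂ᵧᵏ σ`. Differentiating the flatness equation gives, on all of `U`,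
`x σ_{j+1,k} - y σ_{j,k+1} + (j - k) σ_{jk}
  = -i (x y σ_{jk} + j y σ_{j-1,k} + k x σ_{j,k-1} + j k σ_{j-1,k-1})` (`flat_deriv`).
At the origin this is the recursion `(j - k) σ_{jk}(0) = -i j k σ_{j-1,k-1}(0)`.
Its diagonal case `j = k` kills every `σ_{jj}(0)`, and off the diagonal the coefficient `j - k` is
invertible, so `σ_{jk}(0) = 0` follows by descending to `j = 0` or `k = 0` (`mixed_eq_zero`).
Since partial derivatives of smooth functions commute, the vanishing of all `σ_{jk}(0)` is the
vanishing of all iterated Fréchet derivatives (`iteratedFDeriv_eq_zero_of_mixed`).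
-/

/-- The directional derivative of `f` along the constant vector `v`, as a function. -/
noncomputable def dirD (v : ℝ × ℝ) (f : ℝ × ℝ → ℂ) : ℝ × ℝ → ℂ := fun p => fderiv ℝ f p v

/-- The mixed partial derivative `∂ₓʲ ∂ᵧᵏ f`, with the `y`-derivatives taken first. -/
noncomputable def mixedD (j k : ℕ) (f : ℝ × ℝ → ℂ) : ℝ × ℝ → ℂ :=
  (dirD (1, 0))^[j] ((dirD (0, 1))^[k] f)

lemma dirD_smooth {U : Set (ℝ × ℝ)} (hU : IsOpen U) {f : ℝ × ℝ → ℂ}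
    (hf : ContDiffOn ℝ (⊤ : ℕ∞) f U) (v : ℝ × ℝ) : ContDiffOn ℝ (⊤ : ℕ∞) (dirD v f) U :=
  (hf.fderiv_of_isOpen hU (by simp)).clm_apply contDiffOn_const

lemma dirD_iterate_smooth {U : Set (ℝ × ℝ)} (hU : IsOpen U) {f : ℝ × ℝ → ℂ}
    (hf : ContDiffOn ℝ (⊤ : ℕ∞) f U) (v : ℝ × ℝ) (n : ℕ) :
    ContDiffOn ℝ (⊤ : ℕ∞) ((dirD v)^[n] f) U := by
  induction n with
  | zero => exact hf
  | succ n ih => rw [Function.iterate_succ_apply']; exact dirD_smooth hU ih v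

lemma mixedD_smooth {U : Set (ℝ × ℝ)} (hU : IsOpen U) {f : ℝ × ℝ → ℂ}
    (hf : ContDiffOn ℝ (⊤ : ℕ∞) f U) (j k : ℕ) : ContDiffOn ℝ (⊤ : ℕ∞) (mixedD j k f) U :=
  dirD_iterate_smooth hU (dirD_iterate_smooth hU hf _ k) _ j

lemma dirD_congr {U : Set (ℝ × ℝ)} (hU : IsOpen U) {f g : ℝ × ℝ → ℂ} (h : Set.EqOn f g U)
    (v : ℝ × ℝ) : Set.EqOn (dirD v f) (dirD v g) U := fun p hp => by
  unfold dirD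
  rw [(h.eventuallyEq_of_mem (hU.mem_nhds hp)).fderiv_eq]

lemma dirD_iterate_congr {U : Set (ℝ × ℝ)} (hU : IsOpen U) {f g : ℝ × ℝ → ℂ}
    (h : Set.EqOn f g U) (v : ℝ × ℝ) (n : ℕ) :
    Set.EqOn ((dirD v)^[n] f) ((dirD v)^[n] g) U := by
  induction n with
  | zero => exact h
  | succ n ih => simp only [Function.iterate_succ_apply']; exact dirD_congr hU ih v

lemma differentiableAt_of_smooth {U : Set (ℝ × ℝ)} (hU : IsOpen U) {f : ℝ × ℝ → ℂ}
    (hf : ContDiffOn ℝ (⊤ : ℕ∞) f U) {p : ℝ × ℝ} (hp : p ∈ U) : DifferentiableAt ℝ f p :=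
  (hf.contDiffAt (hU.mem_nhds hp)).differentiableAt (by simp)

lemma dirD_comm {U : Set (ℝ × ℝ)} (hU : IsOpen U) {f : ℝ × ℝ → ℂ}
    (hf : ContDiffOn ℝ (⊤ : ℕ∞) f U) (v w : ℝ × ℝ) :
    Set.EqOn (dirD v (dirD w f)) (dirD w (dirD v f)) U := fun p hp => by
  have hfa := hf.contDiffAt (hU.mem_nhds hp)
  have hd : DifferentiableAt ℝ (fderiv ℝ f) p :=
    (hfa.fderiv_right (m := 1) (by norm_cast)).differentiableAt (by simp)
  have key : ∀ a b : ℝ × ℝ, dirD a (dirD b f) p = fderiv ℝ (fderiv ℝ f) p a b := by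
    intro a b
    unfold dirD
    rw [fderiv_clm_apply hd (differentiableAt_const b)]
    simp
  rw [key, key]
  exact (hfa.isSymmSndFDerivAt (by simp; norm_cast)) v w

lemma dirD_iterate_comm {U : Set (ℝ × ℝ)} (hU : IsOpen U) {f : ℝ × ℝ → ℂ}
    (hf : ContDiffOn ℝ (⊤ : ℕ∞) f U) (v w : ℝ × ℝ) (n : ℕ) :
    Set.EqOn ((dirD v)^[n] (dirD w f)) (dirD w ((dirD v)^[n] f)) U := by
  induction n with
  | zero => exact fun _ _ => rfl
  | succ n ih =>
    simp only [Function.iterate_succ_apply']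
    exact (dirD_congr hU ih v).trans (dirD_comm hU (dirD_iterate_smooth hU hf v n) v w)

/-- If all mixed partial derivatives of a smooth function vanish at a point, so do all its
iterated Fréchet derivatives. -/
lemma iteratedFDeriv_eq_zero_of_mixed {U : Set (ℝ × ℝ)} (hU : IsOpen U) {p : ℝ × ℝ} (hp : p ∈ U)
    (n : ℕ) : ∀ f : ℝ × ℝ → ℂ, ContDiffOn ℝ (⊤ : ℕ∞) f U → (∀ j k, mixedD j k f p = 0) →
      iteratedFDeriv ℝ n f p = 0 := by
  induction n with
  | zero =>
    intro f _ h
    ext m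
    simpa [mixedD] using h 0 0
  | succ n ih =>
    intro f hf h
    have hx := ih (dirD (1, 0) f) (dirD_smooth hU hf _) fun j k => by
      have := dirD_iterate_congr hU (dirD_iterate_comm hU hf (0, 1) (1, 0) k) (1, 0) j hp
      exact this.trans (h (j + 1) k)
    have hy := ih (dirD (0, 1) f) (dirD_smooth hU hf _) fun j k => h j (k + 1)
    have hfd : ContDiffAt ℝ n (fderiv ℝ f) p :=
      (hf.contDiffAt (hU.mem_nhds hp)).fderiv_right (by norm_cast; exact le_top)
    -- Evaluation at a fixed vector commutes with the remaining `n` derivatives.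
    have ev : ∀ (v : ℝ × ℝ) (m : Fin n → ℝ × ℝ),
        iteratedFDeriv ℝ n (fderiv ℝ f) p m v = iteratedFDeriv ℝ n (dirD v f) p m := by
      intro v m
      have := (ContinuousLinearMap.apply ℝ ℂ v).iteratedFDeriv_comp_left hfd (i := n) le_rfl
      exact (congrArg (fun T => T m) this).symm
    ext m
    rw [iteratedFDeriv_succ_apply_right]
    set v := m (Fin.last n)
    have hv : v = v.1 • ((1, 0) : ℝ × ℝ) + v.2 • ((0, 1) : ℝ × ℝ) := by ext <;> simp
    rw [hv, map_add, map_smul, map_smul, ev, ev, hx, hy]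
    simp

/-- The product rule applied to an identity of the shape taken by the derivatives of the flatness
equation. -/
lemma differentiate_identity {U : Set (ℝ × ℝ)} (hU : IsOpen U) {A B C E F G : ℝ × ℝ → ℂ}
    (hA : ContDiffOn ℝ (⊤ : ℕ∞) A U) (hB : ContDiffOn ℝ (⊤ : ℕ∞) B U)
    (hC : ContDiffOn ℝ (⊤ : ℕ∞) C U) (hE : ContDiffOn ℝ (⊤ : ℕ∞) E U)
    (hF : ContDiffOn ℝ (⊤ : ℕ∞) F U) (hG : ContDiffOn ℝ (⊤ : ℕ∞) G U) (c a b d : ℂ)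
    (h : ∀ p ∈ U, (p.1 : ℂ) * A p - p.2 * B p + c * C p
      = -Complex.I * (p.1 * (p.2 * C p) + a * (p.2 * E p) + b * (p.1 * F p) + d * G p))
    (v : ℝ × ℝ) (p : ℝ × ℝ) (hp : p ∈ U) :
    (v.1 * A p + p.1 * dirD v A p) - (v.2 * B p + p.2 * dirD v B p) + c * dirD v C p
      = -Complex.I * (v.1 * (p.2 * C p) + p.1 * (v.2 * C p + p.2 * dirD v C p)
        + a * (v.2 * E p + p.2 * dirD v E p) + b * (v.1 * F p + p.1 * dirD v F p)
        + d * dirD v G p) := by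
  have hx : HasFDerivAt (fun q : ℝ × ℝ => (q.1 : ℂ))
      (Complex.ofRealCLM.comp (ContinuousLinearMap.fst ℝ ℝ ℝ)) p :=
    (Complex.ofRealCLM.comp (ContinuousLinearMap.fst ℝ ℝ ℝ)).hasFDerivAt
  have hy : HasFDerivAt (fun q : ℝ × ℝ => (q.2 : ℂ))
      (Complex.ofRealCLM.comp (ContinuousLinearMap.snd ℝ ℝ ℝ)) p :=
    (Complex.ofRealCLM.comp (ContinuousLinearMap.snd ℝ ℝ ℝ)).hasFDerivAt
  have dA := (differentiableAt_of_smooth hU hA hp).hasFDerivAt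
  have dB := (differentiableAt_of_smooth hU hB hp).hasFDerivAt
  have dC := (differentiableAt_of_smooth hU hC hp).hasFDerivAt
  have dE := (differentiableAt_of_smooth hU hE hp).hasFDerivAt
  have dF := (differentiableAt_of_smooth hU hF hp).hasFDerivAt
  have dG := (differentiableAt_of_smooth hU hG hp).hasFDerivAt
  have hl := ((hx.fun_mul dA).fun_sub (hy.fun_mul dB)).fun_add (dC.const_mul c)
  have hr := (((((hx.fun_mul (hy.fun_mul dC)).fun_add ((hy.fun_mul dE).const_mul a)).fun_add
    ((hx.fun_mul dF).const_mul b)).fun_add (dG.const_mul d)).const_mul (-Complex.I))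
  have hlr := hl.congr_of_eventuallyEq
    (Filter.eventuallyEq_of_mem (hU.mem_nhds hp) (fun q hq => (h q hq).symm))
  have := congrArg (fun T : ℝ × ℝ →L[ℝ] ℂ => T v) (hlr.unique hr)
  simp at this
  unfold dirD
  linear_combination this

/-- The flatness equation differentiated `j` times in `x` and `k` times in `y`. The truncated
indices `j - 1` and `k - 1` are harmless, since those terms carry the factor `j` or `k`. -/
lemma flat_deriv {U : Set (ℝ × ℝ)} (hU : IsOpen U) {σ : ℝ × ℝ → ℂ}
    (hσ : ContDiffOn ℝ (⊤ : ℕ∞) σ U)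
    (hflat : ∀ x y : ℝ, (x, y) ∈ U →
      (x : ℂ) * fderiv ℝ σ (x, y) (1, 0) - (y : ℂ) * fderiv ℝ σ (x, y) (0, 1)
        = -Complex.I * x * y * σ (x, y)) (j k : ℕ) :
    ∀ p ∈ U, (p.1 : ℂ) * mixedD (j + 1) k σ p - p.2 * mixedD j (k + 1) σ p
        + ((j : ℂ) - k) * mixedD j k σ p
      = -Complex.I * (p.1 * (p.2 * mixedD j k σ p) + (j : ℂ) * (p.2 * mixedD (j - 1) k σ p)
        + (k : ℂ) * (p.1 * mixedD j (k - 1) σ p)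
        + ((j : ℂ) * k) * mixedD (j - 1) (k - 1) σ p) := by
  have hs := mixedD_smooth hU hσ
  have hDx : ∀ j k, dirD (1, 0) (mixedD j k σ) = mixedD (j + 1) k σ := fun j k => by
    simp only [mixedD, Function.iterate_succ_apply']
  induction j with
  | zero =>
    have hDy0 : ∀ k, dirD (0, 1) (mixedD 0 k σ) = mixedD 0 (k + 1) σ := fun k => by
      simp only [mixedD, Function.iterate_succ_apply', Function.iterate_zero, id]
    induction k with
    | zero =>
      rintro ⟨x, y⟩ hp
      have := hflat x y hp
      simp [mixedD, dirD]
      linear_combination this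
    | succ k ih =>
      intro p hp
      have hDy1 : dirD (0, 1) (mixedD 1 k σ) p = mixedD 1 (k + 1) σ p := by
        have := dirD_comm hU (hs 0 k) (0, 1) (1, 0) hp
        rwa [hDx, hDy0, hDx] at this
      have key := differentiate_identity hU (hs _ _) (hs _ _) (hs _ _) (hs _ _) (hs _ _) (hs _ _)
        _ _ _ _ ih (0, 1) p hp
      have hk : (k : ℂ) * dirD (0, 1) (mixedD 0 (k - 1) σ) p = k * mixedD 0 k σ p := by
        cases k with
        | zero => simp
        | succ k => rw [hDy0]; simp
      simp only [zero_add, hDy1, hDy0] at key hk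
      push_cast at key ⊢
      linear_combination key - Complex.I * p.1 * hk
  | succ j ih =>
    intro p hp
    have key := differentiate_identity hU (hs _ _) (hs _ _) (hs _ _) (hs _ _) (hs _ _) (hs _ _)
      _ _ _ _ ih (1, 0) p hp
    have hj : ∀ l, (j : ℂ) * dirD (1, 0) (mixedD (j - 1) l σ) p = j * mixedD j l σ p := by
      intro l
      cases j with
      | zero => simp
      | succ j => rw [hDx]; simp
    have h1 := hj k
    have h2 := hj (k - 1)
    simp only [hDx] at key h1 h2
    push_cast at key ⊢
    linear_combination key - Complex.I * p.2 * h1 - Complex.I * k * h2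

/-- The recursion satisfied by the Taylor coefficients (up to factorials) has only the zero
solution. -/
lemma mixed_eq_zero (a : ℕ → ℕ → ℂ)
    (h : ∀ j k : ℕ, ((j : ℂ) - k) * a j k = -Complex.I * ((j : ℂ) * k * a (j - 1) (k - 1)))
    (j k : ℕ) : a j k = 0 := by
  have diag : ∀ j, a j j = 0 := fun j => by
    have := h (j + 1) (j + 1)
    have hj : (j : ℂ) + 1 ≠ 0 := by exact_mod_cast j.succ_ne_zero
    simpa [hj] using this
  induction j generalizing k with
  | zero =>
    by_cases hk : k = 0
    · rw [hk, diag]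
    · simpa [hk] using h 0 k
  | succ j ih =>
    by_cases hk : j + 1 = k
    · rw [← hk, diag]
    · have := h (j + 1) k
      rw [Nat.add_sub_cancel, ih, mul_zero, mul_zero] at this
      refine (mul_eq_zero.mp this).resolve_left (sub_ne_zero.mpr ?_)
      exact_mod_cast hk

/-- Proposition `flatatO`: a smooth leafwise flat section over a neighbourhood of the
hyperbolic singular point is Taylor flat at the origin. -/
theorem leafwise_flat_section_taylor_flat_at_origin
    (U : Set (ℝ × ℝ)) (hU : IsOpen U) (h0 : ((0 : ℝ), (0 : ℝ)) ∈ U)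
    (σ : ℝ × ℝ → ℂ) (hσ : ContDiffOn ℝ (⊤ : ℕ∞) σ U)
    (hflat : ∀ x y : ℝ, (x, y) ∈ U →
      (x : ℂ) * fderiv ℝ σ (x, y) (1, 0) - (y : ℂ) * fderiv ℝ σ (x, y) (0, 1)
        = -Complex.I * x * y * σ (x, y)) :
    ∀ n : ℕ, iteratedFDeriv ℝ n σ ((0 : ℝ), (0 : ℝ)) = 0 := by
  intro n
  refine iteratedFDeriv_eq_zero_of_mixed hU h0 n σ hσ
    (mixed_eq_zero (fun j k => mixedD j k σ (0, 0)) fun j k => ?_)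
  have := flat_deriv hU hσ hflat j k (0, 0) h0
  simp only [Complex.ofReal_zero] at this
  linear_combination this
end

section
/- Let a, b : ℕ → ℕ → ℂ satisfy, for all i, j ∈ ℕ: ((i:ℂ) − (j:ℂ))·a i j = b (i−1) (j−1) if i ≥ 1 and j ≥ 1, and ((i:ℂ) − (j:ℂ))·a i j = 0 otherwise; and likewise ((i:ℂ) − (j:ℂ))·b i j = a (i−1) (j−1) if i ≥ 1 and j ≥ 1, and 0 otherwise. Then a i j = 0 and b i j = 0 for all i, j ∈ ℕ. -/
/-!
On the diagonal the factor `i - j` vanishes, so the relations at `(i + 1, i + 1)` read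
`0 = b i i` and `0 = a i i`. Off the diagonal `i - j` is invertible, so the coefficients at
`(i, j)` are determined by those at `(i - 1, j - 1)`, or vanish outright when `i = 0` or `j = 0`;
induction on `i` concludes.
-/

/-- The recursion relations on the double Taylor coefficients of the real and imaginary
parts of a leafwise flat section force all coefficients to vanish
(combinatorial core of Proposition `flatatO`). -/
theorem taylor_coefficients_vanish
    (a b : ℕ → ℕ → ℂ)
    (ha : ∀ i j : ℕ, ((i : ℂ) - (j : ℂ)) * a i j =
      if 1 ≤ i ∧ 1 ≤ j then b (i - 1) (j - 1) else 0)
    (hb : ∀ i j : ℕ, ((i : ℂ) - (j : ℂ)) * b i j =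
      if 1 ≤ i ∧ 1 ≤ j then a (i - 1) (j - 1) else 0) :
    ∀ i j : ℕ, a i j = 0 ∧ b i j = 0 := by
  intro i
  induction i with
  | zero =>
    intro j
    rcases eq_or_ne j 0 with rfl | hj
    · have h1 := ha 1 1
      have h2 := hb 1 1
      simp at h1 h2
      exact ⟨h2.symm, h1.symm⟩
    · have h1 := ha 0 j
      have h2 := hb 0 j
      simp [hj] at h1 h2
      exact ⟨h1, h2⟩
  | succ i ih =>
    intro j
    rcases eq_or_ne (i + 1) j with rfl | hj
    · have h1 := ha (i + 1 + 1) (i + 1 + 1)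
      have h2 := hb (i + 1 + 1) (i + 1 + 1)
      simp at h1 h2
      exact ⟨h2.symm, h1.symm⟩
    · have hne : (((i + 1 : ℕ) : ℂ) - (j : ℂ)) ≠ 0 :=
        sub_ne_zero.mpr (Nat.cast_injective.ne hj)
      have h1 := ha (i + 1) j
      have h2 := hb (i + 1) j
      rw [Nat.add_sub_cancel, (ih (j - 1)).2, ite_self] at h1
      rw [Nat.add_sub_cancel, (ih (j - 1)).1, ite_self] at h2
      exact ⟨(mul_eq_zero.mp h1).resolve_left hne, (mul_eq_zero.mp h2).resolve_left hne⟩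
end

section
/- Let Q₁ = {(x,y) ∈ ℝ² : 0 < x ∧ 0 < y} be the open first quadrant, and let σ : ℝ² → ℂ be smooth on Q₁ (ContDiffOn ℝ ⊤ σ Q₁) and satisfy x·∂σ/∂x(x,y) − y·∂σ/∂y(x,y) = −i·x·y·σ(x,y) for all (x,y) ∈ Q₁. Then there exists a : ℝ → ℂ, smooth on (0,∞) (ContDiffOn ℝ ⊤ a (Set.Ioi 0)), such that σ(x,y) = a(x·y)·exp(−(i/2)·x·y·Real.log(x/y)) for all (x,y) ∈ Q₁. -/
/-!
The integral curves of `x ∂/∂x - y ∂/∂y` are `t ↦ (r eᵗ, s e⁻ᵗ)`, and `xy = rs` is constant along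
them. The flatness equation therefore restricts to the linear ODE `f' = -i r s f` on each curve, so
`f t = f 0 · exp(-i r s t)` (`flat_along_flow`). Every `(x, y)` in the open quadrant is reached from
the diagonal point `(√(xy), √(xy))` at time `t = log(x/y)/2`, which gives the formula with
`a c = σ (√c, √c)`; this `a` is smooth because `√` is smooth on `(0, ∞)`.
-/

/-- A leafwise flat section evolves along a hyperbolic orbit by the phase `exp(-i r s t)`: its
product with the inverse phase has zero derivative. -/
lemma flat_along_flow
    (σ : ℝ × ℝ → ℂ)
    (hσ : ContDiffOn ℝ (⊤ : ℕ∞) σ {p : ℝ × ℝ | 0 < p.1 ∧ 0 < p.2})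
    (hflat : ∀ x y : ℝ, 0 < x → 0 < y →
      (x : ℂ) * fderiv ℝ σ (x, y) (1, 0) - (y : ℂ) * fderiv ℝ σ (x, y) (0, 1)
        = -Complex.I * x * y * σ (x, y))
    {r s : ℝ} (hr : 0 < r) (hs : 0 < s) (t : ℝ) :
    σ (r * Real.exp t, s * Real.exp (-t)) = σ (r, s) * Complex.exp (-(Complex.I * (r * s) * t)) := by
  have hopen : IsOpen {p : ℝ × ℝ | 0 < p.1 ∧ 0 < p.2} :=
    (isOpen_lt continuous_const continuous_fst).inter (isOpen_lt continuous_const continuous_snd)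
  have hderiv : ∀ u : ℝ, HasDerivAt
      (fun v : ℝ => σ (r * Real.exp v, s * Real.exp (-v)) * Complex.exp (Complex.I * (r * s) * v))
      0 u := by
    intro u
    have hx : 0 < r * Real.exp u := by positivity
    have hy : 0 < s * Real.exp (-u) := by positivity
    have hd : DifferentiableAt ℝ σ (r * Real.exp u, s * Real.exp (-u)) :=
      (hσ.contDiffAt (hopen.mem_nhds ⟨hx, hy⟩)).differentiableAt (by simp)
    have hγ : HasDerivAt (fun v : ℝ => (r * Real.exp v, s * Real.exp (-v)))
        (r * Real.exp u, -(s * Real.exp (-u))) u := by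
      refine ((Real.hasDerivAt_exp u).const_mul r).prodMk ?_
      simpa using ((hasDerivAt_neg u).exp).const_mul s
    have h1 := hd.hasFDerivAt.comp_hasDerivAt u hγ
    have h2 : HasDerivAt (fun v : ℝ => Complex.exp (Complex.I * (r * s) * v))
        (Complex.exp (Complex.I * (r * s) * u) * (Complex.I * (r * s))) u := by
      simpa using ((Complex.ofRealCLM.hasDerivAt (x := u)).const_mul (Complex.I * (r * s))).cexp
    refine (h1.mul h2).congr_deriv ?_
    have hsplit : ((r * Real.exp u, -(s * Real.exp (-u))) : ℝ × ℝ)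
        = (r * Real.exp u) • ((1, 0) : ℝ × ℝ) - (s * Real.exp (-u)) • ((0, 1) : ℝ × ℝ) := by
      simp
    have hf := hflat _ _ hx hy
    have hprod : ((r * Real.exp u : ℝ) : ℂ) * ((s * Real.exp (-u) : ℝ) : ℂ) = r * s := by
      have : r * Real.exp u * (s * Real.exp (-u)) = r * s := by
        rw [Real.exp_neg]; field_simp
      exact_mod_cast this
    rw [hsplit, map_sub, map_smul, map_smul, Complex.real_smul, Complex.real_smul, hf]
    simp only [Function.comp_apply]
    linear_combination (-Complex.I * σ (r * Real.exp u, s * Real.exp (-u)) *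
      Complex.exp (Complex.I * (r * s) * u)) * hprod
  have hconst := is_const_of_deriv_eq_zero (fun u => (hderiv u).differentiableAt)
    (fun u => (hderiv u).deriv) t 0
  simp only [Real.exp_zero, neg_zero, mul_one, Complex.ofReal_zero, mul_zero,
    Complex.exp_zero] at hconst
  rw [← hconst, mul_assoc, ← Complex.exp_add, add_neg_cancel, Complex.exp_zero, mul_one]

/-- Proposition `p:flatsecn` (forward direction, first quadrant): a leafwise flat section
on the open first quadrant has the form `a(xy) · exp(-(i/2)·xy·log(x/y))`. -/
theorem flat_section_form_on_first_quadrant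
    (σ : ℝ × ℝ → ℂ)
    (hσ : ContDiffOn ℝ (⊤ : ℕ∞) σ {p : ℝ × ℝ | 0 < p.1 ∧ 0 < p.2})
    (hflat : ∀ x y : ℝ, 0 < x → 0 < y →
      (x : ℂ) * fderiv ℝ σ (x, y) (1, 0) - (y : ℂ) * fderiv ℝ σ (x, y) (0, 1)
        = -Complex.I * x * y * σ (x, y)) :
    ∃ a : ℝ → ℂ, ContDiffOn ℝ (⊤ : ℕ∞) a (Set.Ioi 0) ∧
      ∀ x y : ℝ, 0 < x → 0 < y →
        σ (x, y) = a (x * y) *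
          Complex.exp (-(Complex.I / 2) * (x * y) * Real.log (x / y)) := by
  refine ⟨fun c => σ (√c, √c), ?_, fun x y hx hy => ?_⟩
  · have hsqrt : ContDiffOn ℝ (⊤ : ℕ∞) (fun c : ℝ => √c) (Set.Ioi 0) := fun c hc =>
      (Real.contDiffAt_sqrt (ne_of_gt hc)).contDiffWithinAt
    exact hσ.comp (hsqrt.prodMk hsqrt) fun c hc => ⟨Real.sqrt_pos.2 hc, Real.sqrt_pos.2 hc⟩
  · have hc : 0 < √(x * y) := Real.sqrt_pos.2 (by positivity)
    have h := flat_along_flow σ hσ hflat hc hc (Real.log (x / y) / 2)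
    have h1 : √(x * y) * Real.exp (Real.log (x / y) / 2) = x := by
      rw [Real.exp_half, Real.exp_log (by positivity), ← Real.sqrt_mul (by positivity),
        show x * y * (x / y) = x ^ 2 by field_simp, Real.sqrt_sq hx.le]
    have h2 : √(x * y) * Real.exp (-(Real.log (x / y) / 2)) = y := by
      rw [← neg_div, ← Real.log_inv, inv_div, Real.exp_half, Real.exp_log (by positivity),
        ← Real.sqrt_mul (by positivity), show x * y * (y / x) = y ^ 2 by field_simp,
        Real.sqrt_sq hy.le]
    have h3 : ((√(x * y) : ℝ) : ℂ) * ((√(x * y) : ℝ) : ℂ) = x * y := by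
      exact_mod_cast Real.mul_self_sqrt (by positivity : 0 ≤ x * y)
    rw [h1, h2, h3] at h
    rw [h]
    congr 2
    push_cast
    ring
end

section
/- Let a : ℝ → ℂ be smooth (ContDiff ℝ ⊤ a). Define σ(x,y) = a(x·y)·exp(−(i/2)·x·y·Real.log |x/y|) for x ≠ 0 and y ≠ 0. Then σ satisfies x·∂σ/∂x(x,y) − y·∂σ/∂y(x,y) = −i·x·y·σ(x,y) at every point (x,y) with x ≠ 0 and y ≠ 0. -/
/-!
The left-hand side is the derivative of `σ` along `Y = x ∂/∂x - y ∂/∂y`, whose flow is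
`t ↦ (x eᵗ, y e⁻ᵗ)`. The product `xy` is constant along the flow while `log |x/y|` grows by `2t`,
so `σ` restricted to the orbit is `σ(x, y) · exp(-i·xy·t)`; its derivative at `t = 0` is
`-i·xy·σ(x, y)`. The chain rule identifies this with the left-hand side once `σ` is known to be
differentiable at `(x, y)`, which follows from the explicit formula, valid near `(x, y)`.
-/

/-- Converse direction of Proposition `p:flatsecn`: every function of the form
`a(xy) · exp(-(i/2)·xy·log|x/y|)` is a leafwise flat section away from the axes. -/
theorem flat_section_form_satisfies_pde
    (a : ℝ → ℂ) (ha : ContDiff ℝ (⊤ : ℕ∞) a)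
    (σ : ℝ × ℝ → ℂ)
    (hσdef : ∀ x y : ℝ, x ≠ 0 → y ≠ 0 →
      σ (x, y) = a (x * y) *
        Complex.exp (-(Complex.I / 2) * (x * y) * Real.log |x / y|)) :
    ∀ x y : ℝ, x ≠ 0 → y ≠ 0 →
      (x : ℂ) * fderiv ℝ σ (x, y) (1, 0) - (y : ℂ) * fderiv ℝ σ (x, y) (0, 1)
        = -Complex.I * x * y * σ (x, y) := by
  intro x y hx hy
  have hdiff : DifferentiableAt ℝ σ (x, y) := by
    have hform : DifferentiableAt ℝ (fun p : ℝ × ℝ => a (p.1 * p.2) *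
        Complex.exp (-(Complex.I / 2) *
          ((p.1 * p.2 * (Real.log p.1 - Real.log p.2) : ℝ) : ℂ))) (x, y) := by
      have h1 : DifferentiableAt ℝ (fun p : ℝ × ℝ => a (p.1 * p.2)) (x, y) :=
        (ha.differentiable (by simp)).differentiableAt.comp (x, y)
          (f := fun p : ℝ × ℝ => p.1 * p.2) (by fun_prop)
      have h2 : DifferentiableAt ℝ
          (fun p : ℝ × ℝ => p.1 * p.2 * (Real.log p.1 - Real.log p.2)) (x, y) := by
        fun_prop (disch := assumption)
      have h3 : DifferentiableAt ℝ (fun p : ℝ × ℝ =>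
          ((p.1 * p.2 * (Real.log p.1 - Real.log p.2) : ℝ) : ℂ)) (x, y) :=
        Complex.ofRealCLM.differentiableAt.comp (x, y) h2
      exact h1.mul (h3.const_mul _).cexp
    refine hform.congr_of_eventuallyEq ?_
    have e1 : ∀ᶠ p : ℝ × ℝ in nhds (x, y), p.1 ≠ 0 :=
      continuous_fst.continuousAt.eventually_ne hx
    have e2 : ∀ᶠ p : ℝ × ℝ in nhds (x, y), p.2 ≠ 0 :=
      continuous_snd.continuousAt.eventually_ne hy
    filter_upwards [e1, e2] with p hp1 hp2
    rw [← Prod.mk.eta (p := p), hσdef p.1 p.2 hp1 hp2, Real.log_abs, Real.log_div hp1 hp2]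
    push_cast
    ring_nf
  have hflow : HasDerivAt (fun t : ℝ => (x * Real.exp t, y * Real.exp (-t))) (x, -y) 0 := by
    have h1 := (Real.hasDerivAt_exp 0).const_mul x
    have h2 := ((hasDerivAt_neg (0 : ℝ)).exp).const_mul y
    simpa using h1.prodMk h2
  have hchain : HasDerivAt (fun t : ℝ => σ (x * Real.exp t, y * Real.exp (-t)))
      (fderiv ℝ σ (x, y) (x, -y)) 0 :=
    HasFDerivAt.comp_hasDerivAt_of_eq (0 : ℝ) hdiff.hasFDerivAt hflow (by simp)
  have horbit : (fun t : ℝ => σ (x * Real.exp t, y * Real.exp (-t))) =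
      fun t : ℝ => σ (x, y) * Complex.exp ((t : ℂ) * (-Complex.I * x * y)) := by
    funext t
    have hxt : x * Real.exp t ≠ 0 := mul_ne_zero hx (Real.exp_ne_zero t)
    have hyt : y * Real.exp (-t) ≠ 0 := mul_ne_zero hy (Real.exp_ne_zero _)
    have hprod : x * Real.exp t * (y * Real.exp (-t)) = x * y := by
      rw [mul_mul_mul_comm, ← Real.exp_add]; simp
    have hlog : Real.log |x * Real.exp t / (y * Real.exp (-t))| =
        Real.log |x / y| + 2 * t := by
      rw [Real.log_abs, Real.log_abs, Real.log_div hxt hyt, Real.log_div hx hy,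
        Real.log_mul hx (Real.exp_ne_zero _), Real.log_mul hy (Real.exp_ne_zero _),
        Real.log_exp, Real.log_exp]
      ring
    rw [hσdef _ _ hxt hyt, hσdef x y hx hy, hlog, ← Complex.ofReal_mul, hprod, mul_assoc (a _),
      ← Complex.exp_add]
    push_cast
    ring_nf
  have hexp : HasDerivAt
      (fun t : ℝ => σ (x, y) * Complex.exp ((t : ℂ) * (-Complex.I * x * y)))
      (σ (x, y) * (-Complex.I * x * y)) 0 := by
    have h := ((Complex.ofRealCLM.hasDerivAt (x := (0 : ℝ))).mul_const
      (-Complex.I * (x : ℂ) * y)).cexp.const_mul (σ (x, y))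
    simpa using h
  rw [horbit] at hchain
  have hlin : fderiv ℝ σ (x, y) (x, -y) =
      (x : ℂ) * fderiv ℝ σ (x, y) (1, 0) - (y : ℂ) * fderiv ℝ σ (x, y) (0, 1) := by
    have hv : ((x, -y) : ℝ × ℝ) = x • ((1, 0) : ℝ × ℝ) - y • ((0, 1) : ℝ × ℝ) := by simp
    rw [hv, map_sub, map_smul, map_smul, Complex.real_smul, Complex.real_smul]
  rw [← hlin, hchain.unique hexp, mul_comm]
end

section
/- Let a₁, a₂, a₃, a₄ : ℝ → ℂ be smooth functions, each Taylor flat at 0 (for every n ∈ ℕ, iteratedDeriv n a_j 0 = 0). Define σ : ℝ² → ℂ by σ(x,y) = a_j(x·y)·exp(−(i/2)·x·y·Real.log |x/y|) when (x,y) lies in the j-th open quadrant (j = 1: x>0, y>0; j = 2: x<0, y>0; j = 3: x<0, y<0; j = 4: x>0, y<0), and σ(x,y) = 0 when x·y = 0. Then σ is smooth on all of ℝ² (ContDiff ℝ ⊤ σ). -/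
/-!
Write `t = x * y`. On the open set `t ≠ 0` the section is `a(t) * exp (-(i/2) t log |x/y|)`, with
`a` one of the four data, so the only difficulty is at the axes. The section is one of the functions
`quadMonomial g p k q l`, equal to
`x ^ p * (log |x|) ^ k * y ^ q * (log |y|) ^ l * g(t) * exp (-(i/2) t (log |x| - log |y|))`,
where `p q : ℤ`, `k l : ℕ`, and `g` is a Taylor-flat datum chosen by the signs of `x` and `y`.

Two facts make all of these functions smooth at once.

* Off the axes, both partial derivatives of such a function are linear combinations of functions
  of the same kind (`hasFDerivAt_quadMonomial_off_axes`); `g` is replaced at worst by its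
  derivative, which is again Taylor flat (`IsTaylorFlat.deriv`).
* Near every axis point, such a function is `O(t ^ 2)` (`quadMonomial_isBigO`). Indeed the phase
  has modulus one, `g(t) = O(t ^ N)` for every `N` by Taylor's theorem, and a large power of `x`
  turns `x ^ p * (log |x|) ^ k` into a continuous function because `x * log x` is continuous.
  Hence the function is differentiable with zero derivative at axis points, and the formulas for
  the partial derivatives persist there since flat data vanish at `0`.

Induction on the order of differentiability concludes (`contDiff_quadMonomial`).
-/

open Filter Topology Asymptotics

/-- A smooth function on the line all of whose derivatives vanish at `0`. -/
def IsTaylorFlat (a : ℝ → ℂ) : Prop :=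
  ContDiff ℝ (⊤ : ℕ∞) a ∧ ∀ n : ℕ, iteratedDeriv n a 0 = 0

lemma IsTaylorFlat.zero {a : ℝ → ℂ} (h : IsTaylorFlat a) : a 0 = 0 := by
  simpa using h.2 0

lemma IsTaylorFlat.deriv {a : ℝ → ℂ} (h : IsTaylorFlat a) : IsTaylorFlat (deriv a) :=
  ⟨(contDiff_infty_iff_deriv.1 h.1).2, fun n => by
    rw [← iteratedDeriv_succ']; exact h.2 (n + 1)⟩

lemma IsTaylorFlat.hasDerivAt {a : ℝ → ℂ} (h : IsTaylorFlat a) (t : ℝ) :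
    HasDerivAt a (_root_.deriv a t) t :=
  ((contDiff_infty_iff_deriv.1 h.1).1 t).hasDerivAt

lemma IsTaylorFlat.isBigO {a : ℝ → ℂ} (h : IsTaylorFlat a) (N : ℕ) :
    a =O[𝓝 0] fun t : ℝ => t ^ N := by
  have h1 := taylor_isLittleO_univ (x₀ := 0) (n := N) (h.1.of_le (by exact_mod_cast le_top))
  simpa [taylor_within_apply, iteratedDerivWithin_univ, h.2] using h1.isBigO

/-- The one-variable factor `x ^ p * (log |x|) ^ k`; `Real.log x` is `log |x|`. -/
noncomputable def powLog (p : ℤ) (k : ℕ) (x : ℝ) : ℝ := x ^ p * Real.log x ^ k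

lemma hasDerivAt_powLog (p : ℤ) (k : ℕ) {x : ℝ} (hx : x ≠ 0) :
    HasDerivAt (powLog p k) (p * powLog (p - 1) k x + k * powLog (p - 1) (k - 1) x) x := by
  have h := (hasDerivAt_zpow p x (Or.inl hx)).mul ((Real.hasDerivAt_log hx).pow k)
  refine h.congr_deriv ?_
  simp only [powLog, zpow_sub_one₀ hx, Pi.pow_apply]
  ring

lemma powLog_add_one_left (p : ℤ) (k : ℕ) {x : ℝ} (hx : x ≠ 0) :
    powLog (p + 1) k x = x * powLog p k x := by
  simp only [powLog, zpow_add_one₀ hx]; ring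

lemma powLog_add_one_right (p : ℤ) (k : ℕ) (x : ℝ) :
    powLog p (k + 1) x = Real.log x * powLog p k x := by
  simp only [powLog]; ring

/-- A sufficiently large power of `x` absorbs the singularity of `powLog p k` at `0`. -/
lemma exists_continuous_eq_pow_mul_powLog (p : ℤ) (k N : ℕ) (hN : p.natAbs + k ≤ N) :
    ∃ H : ℝ → ℝ, Continuous H ∧ ∀ x ≠ 0, x ^ N * powLog p k x = H x := by
  refine ⟨fun x => x ^ ((N - k + p : ℤ).toNat) * (x * Real.log x) ^ k, by
    have := Real.continuous_mul_log
    fun_prop, fun x hx => ?_⟩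
  have h0 : 0 ≤ (N - k + p : ℤ) := by omega
  have h1 : x ^ ((N - k + p : ℤ).toNat) = x ^ (N - k + p : ℤ) := by
    rw [← zpow_natCast, Int.toNat_of_nonneg h0]
  beta_reduce
  rw [h1, zpow_add₀ hx, zpow_sub₀ hx, mul_pow, powLog]
  simp only [zpow_natCast]
  field_simp

/-- The functions `x ^ p (log |x|) ^ k y ^ q (log |y|) ^ l g(x y) exp (-(i/2) x y log |x/y|)`,
where the datum `g` depends on the signs of `x` and `y`, that is, on the quadrant. -/
noncomputable def quadMonomial (g : SignType → SignType → ℝ → ℂ) (p : ℤ) (k : ℕ) (q : ℤ) (l : ℕ)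
    (z : ℝ × ℝ) : ℂ :=
  powLog p k z.1 * powLog q l z.2 * g (SignType.sign z.1) (SignType.sign z.2) (z.1 * z.2) *
    Complex.exp (-(Complex.I / 2) * (z.1 * z.2) * (Real.log z.1 - Real.log z.2))

/-- The formula for the `x`-derivative of `quadMonomial g p k q l`. -/
noncomputable def quadMonomialDx (g : SignType → SignType → ℝ → ℂ) (p : ℤ) (k : ℕ) (q : ℤ) (l : ℕ)
    (z : ℝ × ℝ) : ℂ :=
  p * quadMonomial g (p - 1) k q l z + k * quadMonomial g (p - 1) (k - 1) q l z +
    quadMonomial (fun i j => deriv (g i j)) p k (q + 1) l z +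
    -(Complex.I / 2) * (quadMonomial g p (k + 1) (q + 1) l z -
      quadMonomial g p k (q + 1) (l + 1) z + quadMonomial g p k (q + 1) l z)

/-- The formula for the `y`-derivative of `quadMonomial g p k q l`. -/
noncomputable def quadMonomialDy (g : SignType → SignType → ℝ → ℂ) (p : ℤ) (k : ℕ) (q : ℤ) (l : ℕ)
    (z : ℝ × ℝ) : ℂ :=
  q * quadMonomial g p k (q - 1) l z + l * quadMonomial g p k (q - 1) (l - 1) z +
    quadMonomial (fun i j => deriv (g i j)) (p + 1) k q l z +
    -(Complex.I / 2) * (quadMonomial g (p + 1) (k + 1) q l z -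
      quadMonomial g (p + 1) k q (l + 1) z - quadMonomial g (p + 1) k q l z)

/-- The real-linear map `(u, v) ↦ a * u + b * v`. -/
noncomputable def linForm (a b : ℂ) : ℝ × ℝ →L[ℝ] ℂ :=
  (ContinuousLinearMap.fst ℝ ℝ ℝ).smulRight a + (ContinuousLinearMap.snd ℝ ℝ ℝ).smulRight b

lemma quadMonomial_eq_zero {g : SignType → SignType → ℝ → ℂ} (hg : ∀ i j, IsTaylorFlat (g i j))
    (p : ℤ) (k : ℕ) (q : ℤ) (l : ℕ) {z : ℝ × ℝ} (hz : z.1 * z.2 = 0) :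
    quadMonomial g p k q l z = 0 := by
  simp [quadMonomial, hz, (hg _ _).zero]

lemma hasFDerivAt_quadMonomial_off_axes {g : SignType → SignType → ℝ → ℂ}
    (hg : ∀ i j, IsTaylorFlat (g i j)) (p : ℤ) (k : ℕ) (q : ℤ) (l : ℕ) {z : ℝ × ℝ}
    (hx : z.1 ≠ 0) (hy : z.2 ≠ 0) :
    HasFDerivAt (quadMonomial g p k q l)
      (linForm (quadMonomialDx g p k q l z) (quadMonomialDy g p k q l z)) z := by
  set i := SignType.sign z.1 with hi
  set j := SignType.sign z.2 with hj
  have h1 : HasFDerivAt (fun w : ℝ × ℝ => w.1) (ContinuousLinearMap.fst ℝ ℝ ℝ) z := hasFDerivAt_fst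
  have h2 : HasFDerivAt (fun w : ℝ × ℝ => w.2) (ContinuousLinearMap.snd ℝ ℝ ℝ) z := hasFDerivAt_snd
  have c1 := Complex.ofRealCLM.hasFDerivAt.comp z h1
  have c2 := Complex.ofRealCLM.hasFDerivAt.comp z h2
  have L1 := Complex.ofRealCLM.hasFDerivAt.comp z (h1.log hx)
  have L2 := Complex.ofRealCLM.hasFDerivAt.comp z (h2.log hy)
  have P1 := Complex.ofRealCLM.hasFDerivAt.comp z ((hasDerivAt_powLog p k hx).comp_hasFDerivAt z h1)
  have P2 := Complex.ofRealCLM.hasFDerivAt.comp z ((hasDerivAt_powLog q l hy).comp_hasFDerivAt z h2)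
  have G := ((hg i j).hasDerivAt (z.1 * z.2)).hasFDerivAt.comp z (h1.mul h2)
  have E := (((c1.mul c2).const_mul (-(Complex.I / 2))).mul (L1.sub L2)).cexp
  have T := ((P1.mul P2).mul G).mul E
  -- The quadrant, hence the datum in use, is locally constant off the axes.
  have hev : quadMonomial g p k q l =ᶠ[𝓝 z] fun w =>
      powLog p k w.1 * powLog q l w.2 * g i j (w.1 * w.2) *
        Complex.exp (-(Complex.I / 2) * (w.1 * w.2) * (Real.log w.1 - Real.log w.2)) := by
    have s1 : ∀ᶠ w : ℝ × ℝ in 𝓝 z, SignType.sign w.1 = i :=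
      ((continuousAt_sign_of_ne_zero hx).comp continuousAt_fst).eventually_mem
        ((isOpen_discrete {i}).mem_nhds rfl)
    have s2 : ∀ᶠ w : ℝ × ℝ in 𝓝 z, SignType.sign w.2 = j :=
      ((continuousAt_sign_of_ne_zero hy).comp continuousAt_snd).eventually_mem
        ((isOpen_discrete {j}).mem_nhds rfl)
    filter_upwards [s1, s2] with w h1 h2
    simp only [quadMonomial, h1, h2]
  refine HasFDerivAt.congr_of_eventuallyEq ?_ hev
  refine T.congr_fderiv ?_
  have hx' : (z.1 : ℂ) ≠ 0 := by exact_mod_cast hx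
  have hy' : (z.2 : ℂ) ≠ 0 := by exact_mod_cast hy
  ext
  · simp [linForm, quadMonomialDx, quadMonomial, powLog_add_one_left, powLog_add_one_right, hy,
      ← hi, ← hj]
    field_simp
    ring
  · simp [linForm, quadMonomialDy, quadMonomial, powLog_add_one_left, powLog_add_one_right, hx,
      ← hi, ← hj]
    field_simp
    ring

lemma norm_phase (x y : ℝ) :
    ‖Complex.exp (-(Complex.I / 2) * (x * y) * (Real.log x - Real.log y))‖ = 1 := by
  have : -(Complex.I / 2) * (x * y) * (Real.log x - Real.log y) =
      ((-(x * y * (Real.log x - Real.log y)) / 2 : ℝ) : ℂ) * Complex.I := by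
    push_cast; ring
  rw [this, Complex.norm_exp_ofReal_mul_I]

/-- Flatness of the data beats the singular factors `powLog` near the axes. -/
lemma quadMonomial_isBigO {g : SignType → SignType → ℝ → ℂ} (hg : ∀ i j, IsTaylorFlat (g i j))
    (p : ℤ) (k : ℕ) (q : ℤ) (l : ℕ) {z : ℝ × ℝ} (hz : z.1 * z.2 = 0) :
    quadMonomial g p k q l =O[𝓝 z] fun w => (w.1 * w.2) ^ 2 := by
  set N := p.natAbs + k + (q.natAbs + l) with hN
  obtain ⟨H, hHc, hH⟩ := exists_continuous_eq_pow_mul_powLog p k N (by omega)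
  obtain ⟨K, hKc, hK⟩ := exists_continuous_eq_pow_mul_powLog q l N (by omega)
  have ht : Tendsto (fun w : ℝ × ℝ => w.1 * w.2) (𝓝 z) (𝓝 0) := by
    have : Continuous fun w : ℝ × ℝ => w.1 * w.2 := by fun_prop
    simpa [hz] using this.tendsto z
  -- One constant serves for the finitely many sign patterns.
  have hb : ∀ i j, ∃ C, ∀ᶠ w : ℝ × ℝ in 𝓝 z,
      ‖g i j (w.1 * w.2)‖ ≤ C * ‖(w.1 * w.2) ^ (N + 2)‖ := fun i j =>
    (((hg i j).isBigO (N + 2)).comp_tendsto ht).bound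
  choose C hC using hb
  have hC' : ∀ᶠ w : ℝ × ℝ in 𝓝 z, ∀ i j,
      ‖g i j (w.1 * w.2)‖ ≤ C i j * ‖(w.1 * w.2) ^ (N + 2)‖ :=
    eventually_all.2 fun i => eventually_all.2 fun j => hC i j
  obtain ⟨D, hD⟩ : ∃ D, ∀ i j, C i j ≤ D := by
    obtain ⟨D, hD⟩ := Finite.exists_le (fun r : SignType × SignType => C r.1 r.2)
    exact ⟨D, fun i j => hD (i, j)⟩
  have hHK : ∀ᶠ w : ℝ × ℝ in 𝓝 z, ‖H w.1 * K w.2‖ < ‖H z.1 * K z.2‖ + 1 := by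
    have : Continuous fun w : ℝ × ℝ => ‖H w.1 * K w.2‖ := by fun_prop
    exact this.continuousAt.eventually_lt continuousAt_const (lt_add_one _)
  refine IsBigO.of_bound (|D| * (‖H z.1 * K z.2‖ + 1)) ?_
  filter_upwards [hC', hHK] with w hw1 hw2
  by_cases h0 : w.1 * w.2 = 0
  · rw [quadMonomial_eq_zero hg p k q l h0, norm_zero]
    positivity
  have hx : w.1 ≠ 0 := left_ne_zero_of_mul h0
  have hy : w.2 ≠ 0 := right_ne_zero_of_mul h0
  calc ‖quadMonomial g p k q l w‖
      = ‖powLog p k w.1 * powLog q l w.2‖ * ‖g (SignType.sign w.1) (SignType.sign w.2)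
          (w.1 * w.2)‖ := by
        simp only [quadMonomial, norm_mul, norm_phase, Complex.norm_real, mul_one]
    _ ≤ ‖powLog p k w.1 * powLog q l w.2‖ * (|D| * ‖(w.1 * w.2) ^ (N + 2)‖) := by
        gcongr
        refine (hw1 _ _).trans ?_
        gcongr
        exact (hD _ _).trans (le_abs_self D)
    _ = |D| * ‖(w.1 ^ N * powLog p k w.1) * (w.2 ^ N * powLog q l w.2)‖ *
          ‖(w.1 * w.2) ^ 2‖ := by
        simp only [norm_mul, norm_pow]; ring
    _ = |D| * ‖H w.1 * K w.2‖ * ‖(w.1 * w.2) ^ 2‖ := by rw [hH _ hx, hK _ hy]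
    _ ≤ |D| * (‖H z.1 * K z.2‖ + 1) * ‖(w.1 * w.2) ^ 2‖ := by gcongr

lemma hasFDerivAt_quadMonomial {g : SignType → SignType → ℝ → ℂ}
    (hg : ∀ i j, IsTaylorFlat (g i j)) (p : ℤ) (k : ℕ) (q : ℤ) (l : ℕ) (z : ℝ × ℝ) :
    HasFDerivAt (quadMonomial g p k q l)
      (linForm (quadMonomialDx g p k q l z) (quadMonomialDy g p k q l z)) z := by
  by_cases hz : z.1 * z.2 = 0
  · have hg' : ∀ i j, IsTaylorFlat (deriv (g i j)) := fun i j => (hg i j).deriv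
    have h0 : linForm (quadMonomialDx g p k q l z) (quadMonomialDy g p k q l z) = 0 := by
      simp [linForm, quadMonomialDx, quadMonomialDy, quadMonomial_eq_zero hg,
        quadMonomial_eq_zero hg', hz]
    rw [h0]
    -- `x * y` is differentiable and vanishes at `z`, so its square is `o(‖w - z‖)`.
    have hd : DifferentiableAt ℝ (fun w : ℝ × ℝ => w.1 * w.2) z := by fun_prop
    have hO : (fun w : ℝ × ℝ => w.1 * w.2) =O[𝓝 z] fun w => w - z := by
      simpa [hz] using hd.isBigO_sub
    have ht : (fun w : ℝ × ℝ => w.1 * w.2) =o[𝓝 z] fun _ => (1 : ℝ) := by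
      rw [isLittleO_one_iff]
      simpa [hz] using hd.continuousAt.tendsto
    have hsq : (fun w : ℝ × ℝ => (w.1 * w.2) ^ 2) =o[𝓝 z] fun w => w - z := by
      have := ht.mul_isBigO hO.norm_right
      rw [← isLittleO_norm_right]
      simpa [pow_two] using this
    refine HasFDerivAt.of_isLittleO ?_
    simpa [quadMonomial_eq_zero hg p k q l hz] using
      (quadMonomial_isBigO hg p k q l hz).trans_isLittleO hsq
  · exact hasFDerivAt_quadMonomial_off_axes hg p k q l (left_ne_zero_of_mul hz)
      (right_ne_zero_of_mul hz)

lemma contDiff_quadMonomial (n : ℕ) : ∀ {g : SignType → SignType → ℝ → ℂ}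
    (_ : ∀ i j, IsTaylorFlat (g i j)) (p : ℤ) (k : ℕ) (q : ℤ) (l : ℕ),
    ContDiff ℝ n (quadMonomial g p k q l) := by
  induction n with
  | zero =>
    intro g hg p k q l
    exact contDiff_zero.2 <| continuous_iff_continuousAt.2 fun z =>
      (hasFDerivAt_quadMonomial hg p k q l z).continuousAt
  | succ n ih =>
    intro g hg p k q l
    have hg' : ∀ i j, IsTaylorFlat (deriv (g i j)) := fun i j => (hg i j).deriv
    refine contDiff_succ_iff_hasFDerivAt.2 ⟨_, ?_, hasFDerivAt_quadMonomial hg p k q l⟩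
    have hx : ContDiff ℝ n (quadMonomialDx g p k q l) :=
      (((contDiff_const.mul (ih hg _ _ _ _)).add (contDiff_const.mul (ih hg _ _ _ _))).add
        (ih hg' _ _ _ _)).add
        (contDiff_const.mul (((ih hg _ _ _ _).sub (ih hg _ _ _ _)).add (ih hg _ _ _ _)))
    have hy : ContDiff ℝ n (quadMonomialDy g p k q l) :=
      (((contDiff_const.mul (ih hg _ _ _ _)).add (contDiff_const.mul (ih hg _ _ _ _))).add
        (ih hg' _ _ _ _)).add
        (contDiff_const.mul (((ih hg _ _ _ _).sub (ih hg _ _ _ _)).sub (ih hg _ _ _ _)))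
    exact (contDiff_const.smulRight hx).add (contDiff_const.smulRight hy)


/-- Gluing direction of Proposition `fourquad`: four Taylor-flat transversal data on the
four open quadrants piece together into a smooth section over all of ℝ². -/
theorem four_quadrant_gluing_smooth
    (a₁ a₂ a₃ a₄ : ℝ → ℂ)
    (ha₁ : ContDiff ℝ (⊤ : ℕ∞) a₁) (ha₂ : ContDiff ℝ (⊤ : ℕ∞) a₂)
    (ha₃ : ContDiff ℝ (⊤ : ℕ∞) a₃) (ha₄ : ContDiff ℝ (⊤ : ℕ∞) a₄)
    (hf₁ : ∀ n : ℕ, iteratedDeriv n a₁ 0 = 0)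
    (hf₂ : ∀ n : ℕ, iteratedDeriv n a₂ 0 = 0)
    (hf₃ : ∀ n : ℕ, iteratedDeriv n a₃ 0 = 0)
    (hf₄ : ∀ n : ℕ, iteratedDeriv n a₄ 0 = 0)
    (σ : ℝ × ℝ → ℂ)
    (hq₁ : ∀ x y : ℝ, 0 < x → 0 < y →
      σ (x, y) = a₁ (x * y) *
        Complex.exp (-(Complex.I / 2) * (x * y) * Real.log |x / y|))
    (hq₂ : ∀ x y : ℝ, x < 0 → 0 < y →
      σ (x, y) = a₂ (x * y) *
        Complex.exp (-(Complex.I / 2) * (x * y) * Real.log |x / y|))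
    (hq₃ : ∀ x y : ℝ, x < 0 → y < 0 →
      σ (x, y) = a₃ (x * y) *
        Complex.exp (-(Complex.I / 2) * (x * y) * Real.log |x / y|))
    (hq₄ : ∀ x y : ℝ, 0 < x → y < 0 →
      σ (x, y) = a₄ (x * y) *
        Complex.exp (-(Complex.I / 2) * (x * y) * Real.log |x / y|))
    (hax : ∀ x y : ℝ, x * y = 0 → σ (x, y) = 0) :
    ContDiff ℝ (⊤ : ℕ∞) σ := by
  -- On an axis the choice of datum is immaterial, since all of them vanish at `0`.
  set g : SignType → SignType → ℝ → ℂ := fun i j =>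
    if i = 1 then (if j = 1 then a₁ else a₄) else (if j = 1 then a₂ else a₃) with hgdef
  have hg : ∀ i j, IsTaylorFlat (g i j) := by
    intro i j
    simp only [hgdef]
    split_ifs
    exacts [⟨ha₁, hf₁⟩, ⟨ha₄, hf₄⟩, ⟨ha₂, hf₂⟩, ⟨ha₃, hf₃⟩]
  have hσ : σ = quadMonomial g 0 0 0 0 := by
    funext z
    obtain ⟨x, y⟩ := z
    by_cases h0 : x * y = 0
    · rw [hax x y h0, quadMonomial_eq_zero hg 0 0 0 0 h0]
    have hx : x ≠ 0 := left_ne_zero_of_mul h0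
    have hy : y ≠ 0 := right_ne_zero_of_mul h0
    have hlog : (Real.log |x / y| : ℂ) = Real.log x - Real.log y := by
      rw [Real.log_abs, Real.log_div hx hy, Complex.ofReal_sub]
    have hne : (-1 : SignType) ≠ 1 := by decide
    rcases hx.lt_or_gt with h1 | h1 <;> rcases hy.lt_or_gt with h2 | h2
    · rw [hq₃ x y h1 h2, hlog]
      simp [quadMonomial, powLog, hgdef, sign_neg h1, sign_neg h2, hne]
    · rw [hq₂ x y h1 h2, hlog]
      simp [quadMonomial, powLog, hgdef, sign_neg h1, sign_pos h2, hne]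
    · rw [hq₄ x y h1 h2, hlog]
      simp [quadMonomial, powLog, hgdef, sign_pos h1, sign_neg h2, hne]
    · rw [hq₁ x y h1 h2, hlog]
      simp [quadMonomial, powLog, hgdef, sign_pos h1, sign_pos h2]
  rw [hσ]
  exact contDiff_infty.2 fun n => contDiff_quadMonomial n hg 0 0 0 0
end

section
/- Let ε > 0 and let σ : ℝ² → ℂ be smooth on the open square (−ε,ε)² and satisfy x·∂σ/∂x(x,y) − y·∂σ/∂y(x,y) = −i·x·y·σ(x,y) there. Then there exists a : ℝ → ℂ, smooth on (0, ε²) (ContDiffOn ℝ ⊤ a (Set.Ioo 0 (ε²))), such that σ(x,y) = a(x·y)·exp(−(i/2)·x·y·Real.log(x/y)) for all (x,y) ∈ (0,ε)×(0,ε), and a is flat at 0 from the right: for every n ∈ ℕ, the n-th derivative of a (taken within (0,ε²)) tends to 0 as t → 0⁺. -/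
/-!
The section is determined on the first quadrant by its diagonal values, since
`σ(x, y) · exp((i/2) x y log(x/y))` is constant along each leaf `x y = t`; so `a t = σ(√t, √t)`
is the transversal function (`eq_diag_mul_exp`).

Flatness of `a` comes from the Taylor coefficients of `σ` at the origin. Applying `∂ₓʲ ∂ᵧᵏ` to the
equation (`mixed_pde`) and evaluating at `0` gives
`(j - k) ∂ₓʲ∂ᵧᵏσ(0) = -i j k ∂ₓʲ⁻¹∂ᵧᵏ⁻¹σ(0)`. The case `j = k` kills all diagonal coefficients, and
the case `j ≠ k` reduces the others to ones with `j = 0` or `k = 0`, which vanish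
(`mixed_zero`). Hence every mixed partial of `σ` is `O(sᴺ)` at `(s, s)` for every `N`
(`mixed_diag_bound`). Each derivative of `a` is a combination of terms
`∂ₓʲ∂ᵧᵏσ(√t, √t) · (√t)⁻ᵐ`, whose singular factor is absorbed by that bound
(`tendsto_iteratedDerivWithin_diagTerm`).
-/

open Set Filter Topology

/-! ### Mixed partial derivatives on the square -/

/-- The open square `(-ε, ε)²`. -/
def square (ε : ℝ) : Set (ℝ × ℝ) := Ioo (-ε) ε ×ˢ Ioo (-ε) ε

/-- The derivative of `f` in the constant direction `v`. -/
noncomputable def dirDeriv (v : ℝ × ℝ) (f : ℝ × ℝ → ℂ) : ℝ × ℝ → ℂ := fun p => fderiv ℝ f p v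

/-- The mixed partial derivative `∂ₓʲ ∂ᵧᵏ σ`. -/
noncomputable def mixed (σ : ℝ × ℝ → ℂ) (j k : ℕ) : ℝ × ℝ → ℂ :=
  (dirDeriv (1, 0))^[j] ((dirDeriv (0, 1))^[k] σ)

lemma isOpen_square (ε : ℝ) : IsOpen (square ε) := isOpen_Ioo.prod isOpen_Ioo

lemma contDiffOn_dirDeriv {ε : ℝ} {f : ℝ × ℝ → ℂ} (hf : ContDiffOn ℝ (⊤ : ℕ∞) f (square ε))
    (v : ℝ × ℝ) : ContDiffOn ℝ (⊤ : ℕ∞) (dirDeriv v f) (square ε) :=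
  (hf.fderiv_of_isOpen (isOpen_square ε) (by simp)).clm_apply contDiffOn_const

lemma contDiffOn_iterate_dirDeriv {ε : ℝ} {f : ℝ × ℝ → ℂ}
    (hf : ContDiffOn ℝ (⊤ : ℕ∞) f (square ε)) (v : ℝ × ℝ) (n : ℕ) :
    ContDiffOn ℝ (⊤ : ℕ∞) ((dirDeriv v)^[n] f) (square ε) := by
  induction n with
  | zero => exact hf
  | succ n ih => rw [Function.iterate_succ_apply']; exact contDiffOn_dirDeriv ih v

lemma contDiffOn_mixed {ε : ℝ} {σ : ℝ × ℝ → ℂ} (hσ : ContDiffOn ℝ (⊤ : ℕ∞) σ (square ε))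
    (j k : ℕ) : ContDiffOn ℝ (⊤ : ℕ∞) (mixed σ j k) (square ε) :=
  contDiffOn_iterate_dirDeriv (contDiffOn_iterate_dirDeriv hσ _ k) _ j

lemma differentiableAt_of_contDiffOn {ε : ℝ} {f : ℝ × ℝ → ℂ}
    (hf : ContDiffOn ℝ (⊤ : ℕ∞) f (square ε)) {p : ℝ × ℝ} (hp : p ∈ square ε) :
    DifferentiableAt ℝ f p :=
  (hf.contDiffAt ((isOpen_square ε).mem_nhds hp)).differentiableAt (by simp)

lemma dirDeriv_comm {ε : ℝ} {f : ℝ × ℝ → ℂ} (hf : ContDiffOn ℝ (⊤ : ℕ∞) f (square ε))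
    (v w : ℝ × ℝ) {p : ℝ × ℝ} (hp : p ∈ square ε) :
    dirDeriv v (dirDeriv w f) p = dirDeriv w (dirDeriv v f) p := by
  have hc := hf.contDiffAt ((isOpen_square ε).mem_nhds hp)
  have hd : DifferentiableAt ℝ (fderiv ℝ f) p :=
    (hc.fderiv_right (m := 1) (by norm_cast)).differentiableAt (by simp)
  have key : ∀ u u' : ℝ × ℝ, dirDeriv u (dirDeriv u' f) p = fderiv ℝ (fderiv ℝ f) p u u' := by
    intro u u'
    have := hd.hasFDerivAt.clm_apply (hasFDerivAt_const u' p)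
    change fderiv ℝ (fun q => fderiv ℝ f q u') p u = _
    rw [this.fderiv]
    simp
  rw [key, key]
  exact (hc.isSymmSndFDerivAt (by simp; norm_cast)) v w

lemma dirDeriv_iterate_comm {ε : ℝ} {f : ℝ × ℝ → ℂ}
    (hf : ContDiffOn ℝ (⊤ : ℕ∞) f (square ε)) (v w : ℝ × ℝ) (n : ℕ) :
    EqOn (dirDeriv v ((dirDeriv w)^[n] f)) ((dirDeriv w)^[n] (dirDeriv v f)) (square ε) := by
  induction n with
  | zero => intro p _; rfl
  | succ n ih =>
    intro p hp
    rw [Function.iterate_succ_apply', Function.iterate_succ_apply',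
      dirDeriv_comm (contDiffOn_iterate_dirDeriv hf w n) v w hp]
    have := (ih.eventuallyEq_of_mem ((isOpen_square ε).mem_nhds hp)).fderiv_eq (𝕜 := ℝ)
    exact congrArg (fun A : ℝ × ℝ →L[ℝ] ℂ => A w) this

lemma fderiv_mixed {ε : ℝ} {σ : ℝ × ℝ → ℂ} (hσ : ContDiffOn ℝ (⊤ : ℕ∞) σ (square ε))
    (j k : ℕ) {p : ℝ × ℝ} (hp : p ∈ square ε) (c d : ℝ) :
    fderiv ℝ (mixed σ j k) p (c, d) = c * mixed σ (j + 1) k p + d * mixed σ j (k + 1) p := by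
  have h1 : fderiv ℝ (mixed σ j k) p (1, 0) = mixed σ (j + 1) k p := by
    simp only [mixed, Function.iterate_succ_apply', dirDeriv]
  have h2 : fderiv ℝ (mixed σ j k) p (0, 1) = mixed σ j (k + 1) p := by
    have := dirDeriv_iterate_comm (contDiffOn_iterate_dirDeriv hσ (0, 1) k) (0, 1) (1, 0) j hp
    rwa [← Function.iterate_succ_apply' (dirDeriv (0, 1)) k σ] at this
  have h3 : ((c, d) : ℝ × ℝ) = c • ((1, 0) : ℝ × ℝ) + d • ((0, 1) : ℝ × ℝ) := by simp
  rw [h3, map_add, map_smul, map_smul, h1, h2]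
  simp

/-- Chain rule for a mixed partial along a curve in the square. -/
lemma hasDerivAt_mixed {ε : ℝ} {σ : ℝ × ℝ → ℂ} (hσ : ContDiffOn ℝ (⊤ : ℕ∞) σ (square ε))
    (j k : ℕ) {u v : ℝ → ℝ} {u' v' s : ℝ} (hu : HasDerivAt u u' s) (hv : HasDerivAt v v' s)
    (hp : (u s, v s) ∈ square ε) :
    HasDerivAt (fun s => mixed σ j k (u s, v s))
      (u' * mixed σ (j + 1) k (u s, v s) + v' * mixed σ j (k + 1) (u s, v s)) s := by
  rw [← fderiv_mixed hσ j k hp]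
  exact (differentiableAt_of_contDiffOn (contDiffOn_mixed hσ j k) hp).hasFDerivAt.comp_hasDerivAt s
    (hu.prodMk hv)

/-! ### Vanishing of the Taylor series at the singular point -/

/-- The operator `∂ₓʲ ∂ᵧᵏ` applied to the flatness equation. For `j = 0` or `k = 0` the truncated
indices `j - 1`, `k - 1` only occur with coefficient zero. -/
lemma mixed_pde {ε : ℝ} {σ : ℝ × ℝ → ℂ} (hσ : ContDiffOn ℝ (⊤ : ℕ∞) σ (square ε))
    (hflat : ∀ x y : ℝ, x ∈ Ioo (-ε) ε → y ∈ Ioo (-ε) ε →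
      (x : ℂ) * mixed σ 1 0 (x, y) - (y : ℂ) * mixed σ 0 1 (x, y)
        = -Complex.I * x * y * σ (x, y)) (j k : ℕ) :
    ∀ x y : ℝ, x ∈ Ioo (-ε) ε → y ∈ Ioo (-ε) ε →
      (x : ℂ) * mixed σ (j + 1) k (x, y) - (y : ℂ) * mixed σ j (k + 1) (x, y)
          + (j - k) * mixed σ j k (x, y)
        = -Complex.I * (x * y * mixed σ j k (x, y) + j * y * mixed σ (j - 1) k (x, y)
          + k * x * mixed σ j (k - 1) (x, y) + j * k * mixed σ (j - 1) (k - 1) (x, y)) := by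
  have hX : ∀ j k (x y : ℝ), x ∈ Ioo (-ε) ε → y ∈ Ioo (-ε) ε →
      HasDerivAt (fun s => mixed σ j k (s, y)) (mixed σ (j + 1) k (x, y)) x := by
    intro j k x y hx hy
    simpa using hasDerivAt_mixed hσ j k (hasDerivAt_id x) (hasDerivAt_const x y) ⟨hx, hy⟩
  have hY : ∀ j k (x y : ℝ), x ∈ Ioo (-ε) ε → y ∈ Ioo (-ε) ε →
      HasDerivAt (fun s => mixed σ j k (x, s)) (mixed σ j (k + 1) (x, y)) y := by
    intro j k x y hx hy
    simpa using hasDerivAt_mixed hσ j k (hasDerivAt_const y x) (hasDerivAt_id y) ⟨hx, hy⟩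
  -- Differentiating in `y` at `j = 0`, then in `x`, raises the indices. A term such as
  -- `j y ∂ₓʲ⁻¹∂ᵧᵏσ` becomes `j y ∂ₓʲ∂ᵧᵏσ`, once `j = 0` is treated apart.
  have hpred : ∀ n : ℕ, n = 0 ∨ n - 1 + 1 = n := by omega
  have hid : ∀ x : ℝ, HasDerivAt (fun s : ℝ => (s : ℂ)) 1 x := fun x =>
    (hasDerivAt_id x).ofReal_comp
  induction j with
  | zero =>
    induction k with
    | zero =>
      intro x y hx hy
      have := hflat x y hx hy
      simp only [Nat.cast_zero, sub_zero, zero_mul, add_zero, zero_add, mixed,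
        Function.iterate_zero, id] at this ⊢
      rw [this]; ring
    | succ k ih =>
      intro x y hx hy
      have hL := ((((hY 1 k x y hx hy).const_mul (x : ℂ)).sub
        ((hid y).mul (hY 0 (k + 1) x y hx hy))).add
        ((hY 0 k x y hx hy).const_mul ((0 : ℂ) - k)))
      have hR := ((((hid y).const_mul (x : ℂ)).mul (hY 0 k x y hx hy)).add
        ((hY 0 (k - 1) x y hx hy).const_mul ((k : ℂ) * x))).const_mul (-Complex.I)
      have he := hL.unique (hR.congr_of_eventuallyEq (by
        filter_upwards [isOpen_Ioo.mem_nhds hy] with s hs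
        have := ih x s hx hs
        simp only [Nat.cast_zero, zero_mul, add_zero, zero_add] at this
        simpa using this))
      rcases hpred k with h | h
      · subst h
        simp at he ⊢
        linear_combination he
      · rw [h] at he
        simp at he ⊢
        linear_combination he
  | succ j ih =>
    intro x y hx hy
    have hL := ((((hid x).mul (hX (j + 1) k x y hx hy)).sub
      ((hX j (k + 1) x y hx hy).const_mul (y : ℂ))).add
      ((hX j k x y hx hy).const_mul ((j : ℂ) - k)))
    have hR := ((((((hid x).mul_const (y : ℂ)).mul (hX j k x y hx hy)).add
      ((hX (j - 1) k x y hx hy).const_mul ((j : ℂ) * y))).add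
      (((hid x).const_mul (k : ℂ)).mul (hX j (k - 1) x y hx hy))).add
      ((hX (j - 1) (k - 1) x y hx hy).const_mul ((j : ℂ) * k))).const_mul (-Complex.I)
    have he := hL.unique (hR.congr_of_eventuallyEq (by
      filter_upwards [isOpen_Ioo.mem_nhds hx] with s hs
      simpa using ih s y hs hy))
    rcases hpred j with h | h
    · subst h
      simp at he ⊢
      linear_combination he
    · rw [h] at he
      simp at he ⊢
      linear_combination he

/-- The full Taylor series of a leafwise flat section vanishes at the singular point. -/
lemma mixed_zero {ε : ℝ} (hε : 0 < ε) {σ : ℝ × ℝ → ℂ}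
    (hσ : ContDiffOn ℝ (⊤ : ℕ∞) σ (square ε))
    (hflat : ∀ x y : ℝ, x ∈ Ioo (-ε) ε → y ∈ Ioo (-ε) ε →
      (x : ℂ) * mixed σ 1 0 (x, y) - (y : ℂ) * mixed σ 0 1 (x, y)
        = -Complex.I * x * y * σ (x, y)) (j k : ℕ) : mixed σ j k (0, 0) = 0 := by
  have h0 : (0 : ℝ) ∈ Ioo (-ε) ε := ⟨by linarith, hε⟩
  have rel : ∀ j k : ℕ, ((j : ℂ) - k) * mixed σ j k (0, 0)
      = -Complex.I * (j * k * mixed σ (j - 1) (k - 1) (0, 0)) := by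
    intro j k
    simpa using mixed_pde hσ hflat j k 0 0 h0 h0
  -- The relation at `(j + 1, j + 1)` has zero left-hand side and isolates the `(j, j)` coefficient.
  have diag : ∀ j : ℕ, mixed σ j j (0, 0) = 0 := by
    intro j
    have := rel (j + 1) (j + 1)
    have hj : (j : ℂ) + 1 ≠ 0 := by exact_mod_cast Nat.succ_ne_zero j
    simpa [hj] using this
  induction j generalizing k with
  | zero =>
    rcases eq_or_ne k 0 with rfl | hk
    · exact diag 0
    · simpa [hk] using rel 0 k
  | succ j ih =>
    rcases eq_or_ne (j + 1) k with rfl | hk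
    · exact diag (j + 1)
    · have := rel (j + 1) k
      rw [Nat.add_sub_cancel, ih, mul_zero, mul_zero] at this
      refine (mul_eq_zero.mp this).resolve_left ?_
      exact sub_ne_zero.mpr (by exact_mod_cast hk)

/-! ### Decay along the diagonal -/

lemma diag_mem_square {ε s : ℝ} (hs : s ∈ Ioo (-ε) ε) : (s, s) ∈ square ε := ⟨hs, hs⟩

/-- Every mixed partial vanishes to infinite order along the diagonal: integrate the bound for the
next partials, starting from the value `0` at the origin. -/
lemma mixed_diag_bound {ε : ℝ} (hε : 0 < ε) {σ : ℝ × ℝ → ℂ}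
    (hσ : ContDiffOn ℝ (⊤ : ℕ∞) σ (square ε)) (hzero : ∀ j k, mixed σ j k (0, 0) = 0)
    (N j k : ℕ) : ∃ C : ℝ, ∀ s ∈ Icc 0 (ε / 2), ‖mixed σ j k (s, s)‖ ≤ C * s ^ N := by
  have hmem : ∀ s ∈ Icc 0 (ε / 2), s ∈ Ioo (-ε) ε := fun s hs =>
    ⟨by linarith [hs.1], by linarith [hs.2]⟩
  have hd : ∀ j k, ∀ s ∈ Icc 0 (ε / 2), HasDerivAt (fun s => mixed σ j k (s, s))
      (mixed σ (j + 1) k (s, s) + mixed σ j (k + 1) (s, s)) s := by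
    intro j k s hs
    simpa using hasDerivAt_mixed hσ j k (hasDerivAt_id s) (hasDerivAt_id s)
      (diag_mem_square (hmem s hs))
  induction N generalizing j k with
  | zero =>
    obtain ⟨C, hC⟩ := isCompact_Icc.exists_bound_of_continuousOn
      (f := fun s => mixed σ j k (s, s)) (s := Icc 0 (ε / 2))
      (fun s hs => (hd j k s hs).continuousAt.continuousWithinAt)
    exact ⟨C, by simpa using hC⟩
  | succ N ih =>
    obtain ⟨C₁, h₁⟩ := ih (j + 1) k
    obtain ⟨C₂, h₂⟩ := ih j (k + 1)
    refine ⟨|C₁| + |C₂|, fun s hs => ?_⟩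
    have hsub : Icc 0 s ⊆ Icc 0 (ε / 2) := Icc_subset_Icc_right hs.2
    have := (convex_Icc 0 s).norm_image_sub_le_of_norm_hasDerivWithin_le
      (C := (|C₁| + |C₂|) * s ^ N)
      (fun r hr => (hd j k r (hsub hr)).hasDerivWithinAt)
      (fun r hr => by
        have hp : r ^ N ≤ s ^ N := pow_le_pow_left₀ hr.1 hr.2 N
        have hr0 : 0 ≤ r ^ N := pow_nonneg hr.1 N
        calc ‖mixed σ (j + 1) k (r, r) + mixed σ j (k + 1) (r, r)‖
            ≤ C₁ * r ^ N + C₂ * r ^ N :=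
              norm_add_le_of_le (h₁ r (hsub hr)) (h₂ r (hsub hr))
          _ ≤ |C₁| * r ^ N + |C₂| * r ^ N := by gcongr <;> exact le_abs_self _
          _ ≤ (|C₁| + |C₂|) * s ^ N := by rw [add_mul]; gcongr)
      (left_mem_Icc.mpr hs.1) (right_mem_Icc.mpr hs.1)
    rw [hzero j k, sub_zero, sub_zero, Real.norm_of_nonneg hs.1] at this
    rwa [pow_succ, ← mul_assoc]

/-! ### Derivatives of the transversal function -/

/-- The terms `∂ₓʲ∂ᵧᵏσ(√t, √t) · (√t)⁻ᵐ` that span the derivatives of `t ↦ σ(√t, √t)`. -/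
noncomputable def diagTerm (σ : ℝ × ℝ → ℂ) (j k m : ℕ) (t : ℝ) : ℂ :=
  mixed σ j k (√t, √t) * (((√t)⁻¹ ^ m : ℝ) : ℂ)

lemma sqrt_mem {ε t : ℝ} (hε : 0 < ε) (ht : t ∈ Ioo 0 (ε ^ 2)) : √t ∈ Ioo (-ε) ε :=
  ⟨by linarith [Real.sqrt_nonneg t], (Real.sqrt_lt' hε).mpr ht.2⟩

lemma contDiffOn_diagTerm {ε : ℝ} (hε : 0 < ε) {σ : ℝ × ℝ → ℂ}
    (hσ : ContDiffOn ℝ (⊤ : ℕ∞) σ (square ε)) (j k m : ℕ) :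
    ContDiffOn ℝ (⊤ : ℕ∞) (diagTerm σ j k m) (Ioo 0 (ε ^ 2)) := by
  have hs : ContDiffOn ℝ (⊤ : ℕ∞) (fun t : ℝ => √t) (Ioo 0 (ε ^ 2)) :=
    contDiffOn_id.sqrt fun t ht => ht.1.ne'
  refine ((contDiffOn_mixed hσ j k).comp (hs.prodMk hs)
    fun t ht => diag_mem_square (sqrt_mem hε ht)).mul ?_
  exact Complex.ofRealCLM.contDiff.comp_contDiffOn
    ((hs.inv fun t ht => (Real.sqrt_pos.mpr ht.1).ne').pow m)

lemma hasDerivAt_diagTerm {ε : ℝ} (hε : 0 < ε) {σ : ℝ × ℝ → ℂ}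
    (hσ : ContDiffOn ℝ (⊤ : ℕ∞) σ (square ε)) (j k m : ℕ) {t : ℝ} (ht : t ∈ Ioo 0 (ε ^ 2)) :
    HasDerivAt (diagTerm σ j k m)
      ((1 / 2 : ℂ) * (diagTerm σ (j + 1) k (m + 1) t + diagTerm σ j (k + 1) (m + 1) t)
        + (-(m : ℂ) / 2) * diagTerm σ j k (m + 2) t) t := by
  have hs := Real.hasDerivAt_sqrt ht.1.ne'
  have hpos := Real.sqrt_pos.mpr ht.1
  have h1 := hasDerivAt_mixed hσ j k hs hs (diag_mem_square (sqrt_mem hε ht))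
  have h2 : HasDerivAt (fun t : ℝ => (√t)⁻¹ ^ m) (-(m : ℝ) / 2 * (√t)⁻¹ ^ (m + 2)) t := by
    refine ((hs.fun_inv hpos.ne').fun_pow m).congr_deriv ?_
    rcases m with _ | m
    · simp
    · rw [Nat.add_sub_cancel]
      simp only [inv_pow]
      field_simp
      ring
  refine (h1.mul h2.ofReal_comp).congr_deriv ?_
  have : ((√t : ℝ) : ℂ) ≠ 0 := by exact_mod_cast hpos.ne'
  simp only [diagTerm]
  push_cast
  simp only [inv_pow]
  field_simp
  ring

lemma tendsto_diagTerm {ε : ℝ} (hε : 0 < ε) {σ : ℝ × ℝ → ℂ}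
    (hσ : ContDiffOn ℝ (⊤ : ℕ∞) σ (square ε)) (hzero : ∀ j k, mixed σ j k (0, 0) = 0)
    (j k m : ℕ) : Tendsto (diagTerm σ j k m) (𝓝[>] 0) (𝓝 0) := by
  obtain ⟨C, hC⟩ := mixed_diag_bound hε hσ hzero (m + 1) j k
  have hlim : Tendsto (fun t : ℝ => C * √t) (𝓝[>] 0) (𝓝 0) := by
    have : Tendsto (fun t : ℝ => C * √t) (𝓝 0) (𝓝 (C * √0)) :=
      (continuous_const.mul Real.continuous_sqrt).tendsto 0
    simpa using this.mono_left nhdsWithin_le_nhds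
  refine squeeze_zero_norm' ?_ hlim
  filter_upwards [Ioo_mem_nhdsGT (show (0 : ℝ) < (ε / 2) ^ 2 by positivity)] with t ht
  have hpos := Real.sqrt_pos.mpr ht.1
  have hb := hC (√t) ⟨hpos.le, ((Real.sqrt_lt' (by positivity)).mpr ht.2).le⟩
  rw [diagTerm, norm_mul, Complex.norm_real, Real.norm_of_nonneg (by positivity)]
  calc ‖mixed σ j k (√t, √t)‖ * (√t)⁻¹ ^ m ≤ C * √t ^ (m + 1) * (√t)⁻¹ ^ m := by gcongr
    _ = C * √t := by rw [inv_pow]; field_simp; ring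

lemma tendsto_iteratedDerivWithin_diagTerm {ε : ℝ} (hε : 0 < ε) {σ : ℝ × ℝ → ℂ}
    (hσ : ContDiffOn ℝ (⊤ : ℕ∞) σ (square ε)) (hzero : ∀ j k, mixed σ j k (0, 0) = 0)
    (n j k m : ℕ) :
    Tendsto (iteratedDerivWithin n (diagTerm σ j k m) (Ioo 0 (ε ^ 2))) (𝓝[>] 0) (𝓝 0) := by
  induction n generalizing j k m with
  | zero =>
    rw [iteratedDerivWithin_zero]
    exact tendsto_diagTerm hε hσ hzero j k m
  | succ n ih =>
    have hU : UniqueDiffOn ℝ (Ioo 0 (ε ^ 2)) := isOpen_Ioo.uniqueDiffOn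
    have hlim := (((ih (j + 1) k (m + 1)).add (ih j (k + 1) (m + 1))).const_mul (1 / 2 : ℂ)).add
      ((ih j k (m + 2)).const_mul (-(m : ℂ) / 2))
    simp only [add_zero, mul_zero] at hlim
    refine hlim.congr' ?_
    filter_upwards [Ioo_mem_nhdsGT (show (0 : ℝ) < ε ^ 2 by positivity)] with t ht
    have hc : ∀ j k m, ContDiffWithinAt ℝ n (diagTerm σ j k m) (Ioo 0 (ε ^ 2)) t := fun j k m =>
      ((contDiffOn_diagTerm hε hσ j k m) t ht).of_le (by exact_mod_cast le_top)
    have hd : EqOn (derivWithin (diagTerm σ j k m) (Ioo 0 (ε ^ 2)))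
        ((1 / 2 : ℂ) • (diagTerm σ (j + 1) k (m + 1) + diagTerm σ j (k + 1) (m + 1))
          + (-(m : ℂ) / 2) • diagTerm σ j k (m + 2)) (Ioo 0 (ε ^ 2)) := fun s hs =>
      (hasDerivAt_diagTerm hε hσ j k m hs).hasDerivWithinAt.derivWithin (hU s hs)
    have hsum : ContDiffWithinAt ℝ n (diagTerm σ (j + 1) k (m + 1) + diagTerm σ j (k + 1) (m + 1))
        (Ioo 0 (ε ^ 2)) t := (hc _ _ _).add (hc _ _ _)
    have h1 : ContDiffWithinAt ℝ n
        ((1 / 2 : ℂ) • (diagTerm σ (j + 1) k (m + 1) + diagTerm σ j (k + 1) (m + 1)))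
        (Ioo 0 (ε ^ 2)) t := hsum.const_smul (1 / 2 : ℂ)
    have h2 : ContDiffWithinAt ℝ n ((-(m : ℂ) / 2) • diagTerm σ j k (m + 2))
        (Ioo 0 (ε ^ 2)) t := (hc _ _ _).const_smul (-(m : ℂ) / 2)
    rw [iteratedDerivWithin_succ', iteratedDerivWithin_congr hd ht,
      iteratedDerivWithin_add ht hU h1 h2, iteratedDerivWithin_const_smul ht hU _ hsum,
      iteratedDerivWithin_const_smul ht hU _ (hc _ _ _),
      iteratedDerivWithin_add ht hU (hc _ _ _) (hc _ _ _)]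
    rfl

/-! ### Transport along the leaves -/

/-- On the first quadrant, the leaf through `(x, y)` is the curve `u ↦ (e^(c+u), e^(c-u))` with
`e^c = √(x y)`; along it the flatness equation makes `σ · e^(i x y u)` constant. -/
lemma eq_diag_mul_exp {ε : ℝ} {σ : ℝ × ℝ → ℂ} (hσ : ContDiffOn ℝ (⊤ : ℕ∞) σ (square ε))
    (hflat : ∀ x y : ℝ, x ∈ Ioo (-ε) ε → y ∈ Ioo (-ε) ε →
      (x : ℂ) * mixed σ 1 0 (x, y) - (y : ℂ) * mixed σ 0 1 (x, y)
        = -Complex.I * x * y * σ (x, y)) {x y : ℝ} (hx : x ∈ Ioo 0 ε) (hy : y ∈ Ioo 0 ε) :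
    σ (x, y) = σ (√(x * y), √(x * y)) *
      Complex.exp (-(Complex.I / 2) * (x * y) * Real.log (x / y)) := by
  have hε : 0 < ε := hx.1.trans hx.2
  have hlx := Real.log_lt_log hx.1 hx.2
  have hly := Real.log_lt_log hy.1 hy.2
  set c : ℝ := (Real.log x + Real.log y) / 2 with hc
  set v : ℝ := (Real.log x - Real.log y) / 2 with hv
  set L : ℝ := Real.log ε - c with hL
  have hcx : Real.exp (c + v) = x := by
    rw [hc, hv, ← Real.exp_log hx.1]; simp only [Real.log_exp]; ring_nf
  have hcy : Real.exp (c - v) = y := by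
    rw [hc, hv, ← Real.exp_log hy.1]; simp only [Real.log_exp]; ring_nf
  have hsq : √(x * y) = Real.exp c := by
    rw [← hcx, ← hcy, ← Real.exp_add, show c + v + (c - v) = c + c by ring, Real.exp_add,
      Real.sqrt_mul_self (Real.exp_pos c).le]
  have hmem : ∀ u ∈ Ioo (-L) L,
      Real.exp (c + u) ∈ Ioo (-ε) ε ∧ Real.exp (c - u) ∈ Ioo (-ε) ε := by
    intro u hu
    have h1 := Real.exp_pos (c + u)
    have h2 := Real.exp_pos (c - u)
    refine ⟨⟨by linarith, (Real.lt_log_iff_exp_lt hε).mp ?_⟩,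
      ⟨by linarith, (Real.lt_log_iff_exp_lt hε).mp ?_⟩⟩ <;> linarith [hu.1, hu.2]
  set φ : ℝ → ℂ := fun u => σ (Real.exp (c + u), Real.exp (c - u)) *
    Complex.exp (Complex.I * (x * y) * u) with hφ
  have hder : ∀ u ∈ Ioo (-L) L, HasDerivAt φ 0 u := by
    intro u hu
    obtain ⟨m1, m2⟩ := hmem u hu
    have e1 : HasDerivAt (fun u => Real.exp (c + u)) (Real.exp (c + u)) u := by
      simpa using ((hasDerivAt_id u).const_add c).exp
    have e2 : HasDerivAt (fun u => Real.exp (c - u)) (-Real.exp (c - u)) u := by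
      simpa using ((hasDerivAt_id u).const_sub c).exp
    have hs := hasDerivAt_mixed hσ 0 0 e1 e2 ⟨m1, m2⟩
    have hE : HasDerivAt (fun u : ℝ => Complex.exp (Complex.I * (x * y) * u))
        (Complex.exp (Complex.I * (x * y) * u) * (Complex.I * (x * y))) u := by
      simpa using (((hasDerivAt_id u).ofReal_comp).const_mul (Complex.I * ((x : ℂ) * y))).cexp
    refine (hs.mul hE).congr_deriv ?_
    have hp := hflat _ _ m1 m2
    have hxy : ((Real.exp (c + u) : ℝ) : ℂ) * ((Real.exp (c - u) : ℝ) : ℂ) = x * y := by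
      rw [← Complex.ofReal_mul, ← Complex.ofReal_mul, ← Real.exp_add, ← hcx, ← hcy,
        ← Real.exp_add]
      ring_nf
    have h00 : mixed σ 0 0 = σ := rfl
    rw [h00]
    rw [mul_assoc (-Complex.I), hxy] at hp
    simp only [zero_add, Complex.ofReal_neg]
    linear_combination Complex.exp (Complex.I * (x * y) * u) * hp
  have hconst : φ v = φ 0 :=
    isOpen_Ioo.is_const_of_deriv_eq_zero isPreconnected_Ioo
      (fun u hu => (hder u hu).differentiableAt.differentiableWithinAt)
      (fun u hu => (hder u hu).deriv)
      ⟨by linarith, by linarith⟩ ⟨by linarith, by linarith⟩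
  simp only [hφ, hcx, hcy, add_zero, sub_zero, Complex.ofReal_zero, mul_zero, Complex.exp_zero,
    mul_one, ← hsq] at hconst
  rw [← hconst, mul_assoc, ← Complex.exp_add, Real.log_div hx.1.ne' hy.1.ne']
  have : Complex.I * (x * y) * (v : ℂ)
      + -(Complex.I / 2) * (x * y) * ((Real.log x - Real.log y : ℝ) : ℂ) = 0 := by
    rw [hv]; push_cast; ring
  rw [this, Complex.exp_zero, mul_one]


/-- Forward direction of Proposition `fourquad`: a leafwise flat section that is smooth
across the hyperbolic singular point determines, on the first quadrant, a transversal
function `a` that is analytically flat at the singular leaf. -/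
theorem flat_section_transversal_function_flat
    (ε : ℝ) (hε : 0 < ε) (σ : ℝ × ℝ → ℂ)
    (hσ : ContDiffOn ℝ (⊤ : ℕ∞) σ (Set.Ioo (-ε) ε ×ˢ Set.Ioo (-ε) ε))
    (hflat : ∀ x y : ℝ, x ∈ Set.Ioo (-ε) ε → y ∈ Set.Ioo (-ε) ε →
      (x : ℂ) * fderiv ℝ σ (x, y) (1, 0) - (y : ℂ) * fderiv ℝ σ (x, y) (0, 1)
        = -Complex.I * x * y * σ (x, y)) :
    ∃ a : ℝ → ℂ, ContDiffOn ℝ (⊤ : ℕ∞) a (Set.Ioo 0 (ε ^ 2)) ∧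
      (∀ x y : ℝ, x ∈ Set.Ioo 0 ε → y ∈ Set.Ioo 0 ε →
        σ (x, y) = a (x * y) *
          Complex.exp (-(Complex.I / 2) * (x * y) * Real.log (x / y))) ∧
      ∀ n : ℕ, Filter.Tendsto (iteratedDerivWithin n a (Set.Ioo 0 (ε ^ 2)))
        (nhdsWithin 0 (Set.Ioi 0)) (nhds 0) := by
  have hpde : ∀ x y : ℝ, x ∈ Ioo (-ε) ε → y ∈ Ioo (-ε) ε →
      (x : ℂ) * mixed σ 1 0 (x, y) - (y : ℂ) * mixed σ 0 1 (x, y)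
        = -Complex.I * x * y * σ (x, y) := hflat
  have hzero := mixed_zero hε hσ hpde
  have ha : diagTerm σ 0 0 0 = fun t => σ (√t, √t) := by
    funext t
    simp [diagTerm, mixed]
  refine ⟨fun t => σ (√t, √t), ?_, fun x y hx hy => eq_diag_mul_exp hσ hpde hx hy, fun n => ?_⟩
  · exact ha ▸ contDiffOn_diagTerm hε hσ 0 0 0
  · exact ha ▸ tendsto_iteratedDerivWithin_diagTerm hε hσ hzero n 0 0 0
end
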